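/- Let 1/2 < s < 1 and C, R > 0. Let W be a (2s, C)-Frostman random variable with values in the ball B(0,R) ⊂ ℝ², and let W' be an independent copy of W. Then there are an absolute constant A > 0 and, for each t, a constant B_t > 0 depending only on t, such that for every t with t ≤ 1 and s < t < 2s − 1/2 and every n ∈ ℕ, Hₙ(|W − W'|) ≥ n·t − log₊C − A·log₊R − A·|log(2s − t − 1/2)| − B_t. -/

import Mathlib

open MeasureTheory ProbabilityTheory Real

/-- The dyadic discretization map `D_n(x) = 2^{-n} ⌊2^n x⌋`. -/
noncomputable def Dn (n : ℕ) (x : ℝ) : ℝ := (⌊(2 : ℝ) ^ n * x⌋ : ℝ) / (2 : ℝ) ^ n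

/-- Shannon entropy (base 2) of the discrete random variable `f` under `P`. -/
noncomputable def entOf {Ω : Type*} [MeasurableSpace Ω] {S : Type*}
    (P : Measure Ω) (f : Ω → S) : ℝ :=
  ∑' s : S, -((P (f ⁻¹' {s})).toReal * Real.logb 2 (P (f ⁻¹' {s})).toReal)

/-- `H_n(X)`: entropy of `D_n(X)`. -/
noncomputable def Hn {Ω : Type*} [MeasurableSpace Ω] (P : Measure Ω) (n : ℕ) (X : Ω → ℝ) : ℝ :=
  entOf P (fun ω => Dn n (X ω))

/-- `X` is `(s,C)`-Frostman: `P(X ∈ B(z,r)) ≤ C r^s` for every ball. -/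
def Frostman {Ω : Type*} [MeasurableSpace Ω] {E : Type*} [PseudoMetricSpace E]
    (P : Measure Ω) (X : Ω → E) (s C : ℝ) : Prop :=
  ∀ (z : E) (r : ℝ), 0 < r → (P (X ⁻¹' Metric.ball z r)).toReal ≤ C * r ^ s

/-- `log₊ x = max (log₂ x) 0`. -/
noncomputable def logPlus (x : ℝ) : ℝ := max (Real.logb 2 x) 0

/-!
A random variable whose atoms have mass at most `M` has entropy at least `-log₂ M`, so it suffices
to bound the probability that `W - W'` lies in an annulus `r - d ≤ ‖x‖ ≤ r` with `d = 2⁻ⁿ`. Up to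
normalization this is at most a Gaussian average, at scale `d`, of the law `ν` of `W - W'`
convolved with the uniform measure on the circle of radius `r`. On the Fourier side the Gaussian
average becomes a damped integral of `ν̂ = |μ̂|² ≥ 0`, where `μ` is the law of `W`, times the
transform of the circle, which decays like `(r ‖ξ‖) ^ (-1/2)`. Writing `‖ξ‖ ^ (-1/2)` as a
superposition of Gaussians turns this integral back into Gaussian averages of `ν` at all scales
above `d`, and these are controlled by the Frostman condition.
-/

section CircleIntegral

/-- `circleCosIntegral l` is `2π J₀(l)`, with `J₀` the Bessel function of order zero: the Fourier
transform of arc length on the unit circle, at a frequency of norm `l`. -/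
noncomputable def circleCosIntegral (l : ℝ) : ℝ := ∫ θ in (0 : ℝ)..2 * π, cos (l * cos θ)

lemma continuous_cos_mul_cos (l : ℝ) : Continuous fun θ : ℝ => cos (l * cos θ) := by fun_prop

lemma integral_cos_mul_cos_le (l : ℝ) {a b : ℝ} (hab : a ≤ b) :
    ∫ θ in a..b, cos (l * cos θ) ≤ b - a := by
  calc ∫ θ in a..b, cos (l * cos θ) ≤ ∫ _ in a..b, (1 : ℝ) :=
        intervalIntegral.integral_mono_on hab ((continuous_cos_mul_cos l).intervalIntegrable _ _)
          (by simp) fun θ _ => cos_le_one _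
    _ = b - a := by simp

lemma hasDerivAt_neg_one_add_sin_mul_cos_div {l θ : ℝ} (hl : l ≠ 0) (hθ : sin θ ≠ 0) :
    HasDerivAt (fun θ => -((1 + sin (l * cos θ)) / (l * sin θ)))
      (cos (l * cos θ) + (1 + sin (l * cos θ)) * cos θ / (l * sin θ ^ 2)) θ := by
  have hden : HasDerivAt (fun θ => l * sin θ) (l * cos θ) θ := (hasDerivAt_sin θ).const_mul l
  have hnum : HasDerivAt (fun θ => 1 + sin (l * cos θ)) (cos (l * cos θ) * (l * -sin θ)) θ :=
    ((hasDerivAt_cos θ).const_mul l).sin.const_add 1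
  refine (hnum.div hden (mul_ne_zero hl hθ)).neg.congr_deriv ?_
  field_simp
  ring

-- Non-stationary phase: the shift by `1` in the primitive makes the error term nonnegative.
lemma integral_cos_mul_cos_le_two_div {l a : ℝ} (hl : 0 < l) (ha₀ : 0 < a) (ha : a ≤ π / 2) :
    ∫ θ in a..π / 2, cos (l * cos θ) ≤ 2 / (l * sin a) := by
  have hsin : ∀ θ ∈ Set.Icc a (π / 2), 0 < sin θ := fun θ hθ =>
    sin_pos_of_pos_of_lt_pi (ha₀.trans_le hθ.1) (by linarith [hθ.2, pi_pos])
  have hderiv : ∀ θ ∈ Set.Icc a (π / 2), HasDerivAt _ _ θ := fun θ hθ =>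
    hasDerivAt_neg_one_add_sin_mul_cos_div hl.ne' (hsin θ hθ).ne'
  have hle : ∀ θ ∈ Set.Ioo a (π / 2), cos (l * cos θ) ≤
      cos (l * cos θ) + (1 + sin (l * cos θ)) * cos θ / (l * sin θ ^ 2) := fun θ hθ => by
    have hcos : 0 ≤ cos θ := cos_nonneg_of_mem_Icc ⟨by linarith [hθ.1, pi_pos], hθ.2.le⟩
    have hone : 0 ≤ 1 + sin (l * cos θ) := by linarith [neg_one_le_sin (l * cos θ)]
    exact le_add_of_nonneg_right (by positivity)
  have hsina : 0 < sin a := hsin a ⟨le_rfl, ha⟩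
  calc ∫ θ in a..π / 2, cos (l * cos θ)
      ≤ -((1 + sin (l * cos (π / 2))) / (l * sin (π / 2)))
          - -((1 + sin (l * cos a)) / (l * sin a)) :=
        intervalIntegral.integral_le_sub_of_hasDeriv_right_of_le ha
          (fun θ hθ => (hderiv θ hθ).continuousAt.continuousWithinAt)
          (fun θ hθ => (hderiv θ ⟨hθ.1.le, hθ.2.le⟩).hasDerivWithinAt)
          (continuous_cos_mul_cos l).integrableOn_Icc hle
    _ ≤ (1 + sin (l * cos a)) / (l * sin a) := by
        simp only [cos_pi_div_two, sin_pi_div_two, mul_zero, sin_zero, add_zero, mul_one]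
        linarith [one_div_pos.2 hl]
    _ ≤ 2 / (l * sin a) := by
        gcongr
        linarith [sin_le_one (l * cos a)]

lemma integral_cos_mul_cos_quarter_le {l : ℝ} (hl : 1 ≤ l) :
    ∫ θ in (0 : ℝ)..π / 2, cos (l * cos θ) ≤ 5 / √l := by
  have hl₀ : 0 < l := by linarith
  have hsqrt : 1 ≤ √l := one_le_sqrt.2 hl
  have ha₀ : 0 < 1 / √l := by positivity
  have ha₁ : 1 / √l ≤ 1 := div_le_one_of_le₀ hsqrt (sqrt_nonneg l)
  have ha : 1 / √l ≤ π / 2 := by linarith [pi_gt_three]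
  have hsin : 1 / √l / 2 ≤ sin (1 / √l) := calc
    1 / √l / 2 ≤ 2 / π * (1 / √l) := by
      rw [div_eq_inv_mul]
      gcongr
      rw [inv_eq_one_div, div_le_div_iff₀ two_pos pi_pos]
      linarith [pi_le_four]
    _ ≤ sin (1 / √l) := mul_le_sin ha₀.le ha
  rw [← intervalIntegral.integral_add_adjacent_intervals
    ((continuous_cos_mul_cos l).intervalIntegrable 0 (1 / √l))
    ((continuous_cos_mul_cos l).intervalIntegrable _ _)]
  calc _ ≤ 1 / √l + 2 / (l * sin (1 / √l)) :=
        add_le_add ((integral_cos_mul_cos_le l ha₀.le).trans_eq (sub_zero _))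
          (integral_cos_mul_cos_le_two_div hl₀ ha₀ ha)
    _ ≤ 1 / √l + 2 / (l * (1 / √l / 2)) := by gcongr
    _ = 5 / √l := by
        nth_rewrite 2 [← mul_self_sqrt hl₀.le]
        field_simp
        norm_num

lemma circleCosIntegral_eq_four_mul (l : ℝ) :
    circleCosIntegral l = 4 * ∫ θ in (0 : ℝ)..π / 2, cos (l * cos θ) := by
  have hint (a b : ℝ) : IntervalIntegrable (fun θ : ℝ => cos (l * cos θ)) volume a b :=
    (continuous_cos_mul_cos l).intervalIntegrable a b
  have hhalf : ∫ θ in π..2 * π, cos (l * cos θ) = ∫ θ in (0 : ℝ)..π, cos (l * cos θ) := by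
    have h := intervalIntegral.integral_comp_add_right (fun θ => cos (l * cos θ))
      (a := 0) (b := π) π
    simp only [cos_add_pi, mul_neg, cos_neg, zero_add] at h
    rw [h, two_mul]
  have hquarter : ∫ θ in π / 2..π, cos (l * cos θ) =
      ∫ θ in (0 : ℝ)..π / 2, cos (l * cos θ) := by
    have h := intervalIntegral.integral_comp_sub_left (fun θ => cos (l * cos θ))
      (a := 0) (b := π / 2) π
    simp only [cos_pi_sub, mul_neg, cos_neg, sub_zero, sub_half] at h
    exact h.symm
  rw [circleCosIntegral, ← intervalIntegral.integral_add_adjacent_intervals (hint 0 π) (hint π _),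
    hhalf, ← intervalIntegral.integral_add_adjacent_intervals (hint 0 (π / 2)) (hint _ π), hquarter]
  ring

lemma circleCosIntegral_le {l : ℝ} (hl : 0 < l) : circleCosIntegral l ≤ 20 / √l := by
  rcases le_total 1 l with h | h
  · calc circleCosIntegral l = 4 * ∫ θ in (0 : ℝ)..π / 2, cos (l * cos θ) :=
          circleCosIntegral_eq_four_mul l
      _ ≤ 4 * (5 / √l) := by gcongr; exact integral_cos_mul_cos_quarter_le h
      _ = 20 / √l := by ring
  · calc circleCosIntegral l ≤ 2 * π - 0 := integral_cos_mul_cos_le l two_pi_pos.le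
      _ ≤ 20 := by linarith [pi_le_four]
      _ ≤ 20 / √l := le_div_self (by norm_num) (sqrt_pos.2 hl) (sqrt_le_one.2 h)

end CircleIntegral

section GaussianAverage

/-- `gaussianAverage ν w = ∫ exp (-‖x‖² / (4 w)) dν` averages `ν` against a Gaussian at scale `√w`
around the origin. Up to normalization it is the density at the origin of the heat flow started
from `ν`, at time `w`. -/
noncomputable def gaussianAverage {V : Type*} [NormedAddCommGroup V] [MeasurableSpace V]
    (ν : Measure V) (w : ℝ) : ℝ :=
  ∫ x, exp (-‖x‖ ^ 2 / (4 * w)) ∂ν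

lemma exp_neg_sq_div_le_one (x : ℝ) {w : ℝ} (hw : 0 ≤ w) : exp (-x ^ 2 / (4 * w)) ≤ 1 :=
  exp_le_one_iff.2 (div_nonpos_of_nonpos_of_nonneg (neg_nonpos.2 (sq_nonneg x)) (by positivity))

section Normed

variable {V : Type*} [NormedAddCommGroup V] [MeasurableSpace V] [OpensMeasurableSpace V]
  {ν : Measure V}

lemma integrable_exp_neg_norm_sq_div [IsFiniteMeasure ν] {w : ℝ} (hw : 0 ≤ w) :
    Integrable (fun x => exp (-‖x‖ ^ 2 / (4 * w))) ν :=
  .of_bound (Measurable.aestronglyMeasurable (by fun_prop)) 1 <| .of_forall fun x => by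
    simpa only [norm_eq_abs, abs_exp] using exp_neg_sq_div_le_one ‖x‖ hw

lemma gaussianAverage_le_one [IsProbabilityMeasure ν] {w : ℝ} (hw : 0 ≤ w) :
    gaussianAverage ν w ≤ 1 := by
  simpa [gaussianAverage] using
    integral_mono (integrable_exp_neg_norm_sq_div (ν := ν) hw) (integrable_const 1) fun x =>
      exp_neg_sq_div_le_one ‖x‖ hw

lemma lintegral_exp_neg {α : Type*} [MeasurableSpace α] (μ : Measure α) [SFinite μ] {f : α → ℝ}
    (hf : Measurable f) :
    ∫⁻ x, ENNReal.ofReal (exp (-f x)) ∂μ = ∫⁻ τ, ENNReal.ofReal (exp (-τ)) * μ {x | f x < τ} := by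
  let ρ : Measure ℝ := volume.withDensity fun τ => ENNReal.ofReal (exp (-τ))
  have hρ (a : ℝ) : ρ (Set.Ioi a) = ENNReal.ofReal (exp (-a)) := by
    have hint : IntegrableOn (fun τ => exp (-τ)) (Set.Ioi a) := by
      simpa using exp_neg_integrableOn_Ioi a one_pos
    rw [withDensity_apply _ measurableSet_Ioi, ← ofReal_integral_eq_lintegral_ofReal hint
      (.of_forall fun _ => (exp_pos _).le), integral_exp_neg_Ioi]
  have hS : MeasurableSet {p : α × ℝ | f p.1 < p.2} :=
    measurableSet_lt (hf.comp measurable_fst) measurable_snd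
  calc ∫⁻ x, ENNReal.ofReal (exp (-f x)) ∂μ = ∫⁻ x, ρ (Set.Ioi (f x)) ∂μ := by simp only [hρ]
    _ = μ.prod ρ {p | f p.1 < p.2} := (Measure.prod_apply hS).symm
    _ = ∫⁻ τ, μ {x | f x < τ} ∂ρ := Measure.prod_apply_symm hS
    _ = ∫⁻ τ, ENNReal.ofReal (exp (-τ)) * μ {x | f x < τ} :=
      lintegral_withDensity_eq_lintegral_mul _ (by fun_prop) (measurable_measure_prodMk_right hS)

lemma setOf_norm_sq_div_lt {V : Type*} [SeminormedAddCommGroup V] {w : ℝ} (hw : 0 < w) (τ : ℝ) :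
    {x : V | ‖x‖ ^ 2 / (4 * w) < τ} = Metric.ball 0 √(4 * w * τ) := by
  ext x
  rw [Set.mem_ofPred_eq, mem_ball_zero_iff, div_lt_iff₀ (by positivity), lt_sqrt (norm_nonneg _),
    mul_comm]

lemma gaussianAverage_le_of_measureReal_ball_le [IsFiniteMeasure ν] {s C w : ℝ} (hs : 0 ≤ s)
    (hC : 0 ≤ C) (hw : 0 < w)
    (hν : ∀ r, 0 < r → ν.real (Metric.ball 0 r) ≤ C * r ^ (2 * s)) :
    gaussianAverage ν w ≤ C * (4 * w) ^ s * Gamma (s + 1) := by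
  have hball {τ : ℝ} (hτ : 0 < τ) :
      ν {x | ‖x‖ ^ 2 / (4 * w) < τ} ≤ ENNReal.ofReal (C * (4 * w) ^ s * τ ^ s) := by
    rw [setOf_norm_sq_div_lt hw, ENNReal.le_ofReal_iff_toReal_le (measure_ne_top _ _)
      (by positivity)]
    refine (hν √(4 * w * τ) (by positivity)).trans_eq ?_
    rw [sqrt_eq_rpow, ← rpow_mul (by positivity), one_div, inv_mul_cancel_left₀ two_ne_zero,
      mul_rpow (by positivity) hτ.le, mul_assoc]
  have hempty {τ : ℝ} (hτ : τ ≤ 0) : {x : V | ‖x‖ ^ 2 / (4 * w) < τ} = ∅ :=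
    Set.eq_empty_of_forall_notMem fun x hx => hx.not_ge (hτ.trans (by positivity))
  have hGamma := Gamma_eq_integral (s := s + 1) (by positivity)
  have hconv := GammaIntegral_convergent (s := s + 1) (by positivity)
  rw [add_sub_cancel_right] at hGamma hconv
  rw [gaussianAverage, integral_eq_lintegral_of_nonneg_ae (.of_forall fun _ => (exp_pos _).le)
    (integrable_exp_neg_norm_sq_div hw.le).aestronglyMeasurable]
  refine ENNReal.toReal_le_of_le_ofReal (by positivity) ?_
  calc ∫⁻ x, ENNReal.ofReal (exp (-‖x‖ ^ 2 / (4 * w))) ∂ν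
      = ∫⁻ τ, ENNReal.ofReal (exp (-τ)) * ν {x | ‖x‖ ^ 2 / (4 * w) < τ} := by
        simp_rw [neg_div]
        exact lintegral_exp_neg ν (by fun_prop)
    _ = ∫⁻ τ in Set.Ioi 0, ENNReal.ofReal (exp (-τ)) * ν {x | ‖x‖ ^ 2 / (4 * w) < τ} := by
        refine (setLIntegral_eq_of_support_subset fun τ hτ => ?_).symm
        by_contra h
        exact hτ (by simp [hempty (not_lt.1 h)])
    _ ≤ ∫⁻ τ in Set.Ioi 0,
          ENNReal.ofReal (C * (4 * w) ^ s * (exp (-τ) * τ ^ s)) := by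
        refine setLIntegral_mono (by fun_prop) fun τ hτ => ?_
        rw [mul_left_comm, ENNReal.ofReal_mul (exp_pos _).le]
        gcongr
        exact hball hτ
    _ = ENNReal.ofReal (C * (4 * w) ^ s * Gamma (s + 1)) := by
        rw [hGamma, ← integral_const_mul, ofReal_integral_eq_lintegral_ofReal (hconv.const_mul _)]
        filter_upwards [ae_restrict_mem measurableSet_Ioi] with τ (hτ : 0 < τ)
        positivity

end Normed

section InnerProduct

variable {V : Type*} [NormedAddCommGroup V] [InnerProductSpace ℝ V] [MeasurableSpace V]
  [BorelSpace V]

lemma re_charFun [SecondCountableTopology V] (ν : Measure V) [IsFiniteMeasure ν] (ξ : V) :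
    (charFun ν ξ).re = ∫ x, cos (inner ℝ x ξ) ∂ν := by
  have hint : Integrable (fun x => Complex.exp (inner ℝ x ξ * Complex.I)) ν :=
    .of_bound (Measurable.aestronglyMeasurable (by fun_prop)) 1 <| .of_forall fun x => by
      rw [Complex.norm_exp_ofReal_mul_I]
  rw [charFun_apply, ← RCLike.re_eq_complex_re, ← integral_re hint]
  simp only [RCLike.re_eq_complex_re, Complex.exp_ofReal_mul_I_re]

variable [FiniteDimensional ℝ V]

lemma integrable_exp_neg_mul_norm_sq {w : ℝ} (hw : 0 < w) :
    Integrable fun ξ : V => exp (-w * ‖ξ‖ ^ 2) :=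
  .of_integral_ne_zero <| by
    rw [GaussianFourier.integral_rexp_neg_mul_sq_norm hw]
    positivity

lemma integral_exp_neg_mul_norm_sq_mul_cos {w : ℝ} (hw : 0 < w) (x : V) :
    ∫ ξ : V, exp (-w * ‖ξ‖ ^ 2) * cos (inner ℝ x ξ) =
      (π / w) ^ (Module.finrank ℝ V / 2 : ℝ) * exp (-‖x‖ ^ 2 / (4 * w)) := by
  have hw' : 0 < (w : ℂ).re := by simpa using hw
  have hint := GaussianFourier.integrable_cexp_neg_mul_sq_norm_add hw' Complex.I x
  calc ∫ ξ : V, exp (-w * ‖ξ‖ ^ 2) * cos (inner ℝ x ξ)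
      = ∫ ξ : V, (Complex.exp (-w * ‖ξ‖ ^ 2 + Complex.I * inner ℝ x ξ)).re := by
        refine integral_congr_ae (.of_forall fun ξ => ?_)
        simp [Complex.exp_re, ← Complex.ofReal_pow]
    _ = (∫ ξ : V, Complex.exp (-w * ‖ξ‖ ^ 2 + Complex.I * inner ℝ x ξ)).re := integral_re hint
    _ = (π / w) ^ (Module.finrank ℝ V / 2 : ℝ) * exp (-‖x‖ ^ 2 / (4 * w)) := by
        rw [GaussianFourier.integral_cexp_neg_mul_sq_norm_add hw', ← Complex.ofReal_re (_ * exp _),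
          Complex.ofReal_mul, Complex.ofReal_cpow (by positivity)]
        push_cast
        rw [Complex.I_sq, neg_one_mul]

theorem mul_gaussianAverage_eq_integral_charFun (ν : Measure V) [IsFiniteMeasure ν] {w : ℝ}
    (hw : 0 < w) :
    (π / w) ^ (Module.finrank ℝ V / 2 : ℝ) * gaussianAverage ν w =
      ∫ ξ, exp (-w * ‖ξ‖ ^ 2) * (charFun ν ξ).re := by
  have hint : Integrable (Function.uncurry fun x ξ : V => exp (-w * ‖ξ‖ ^ 2) * cos (inner ℝ x ξ))
      (ν.prod volume) := by
    refine ((integrable_exp_neg_mul_norm_sq hw).comp_snd ν).mono' ?_ (.of_forall fun p => ?_)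
    · exact Measurable.aestronglyMeasurable (by unfold Function.uncurry; fun_prop)
    · simpa only [Function.uncurry, norm_mul, norm_eq_abs, abs_exp] using
        mul_le_of_le_one_right (exp_pos _).le (abs_cos_le_one _)
  simp only [gaussianAverage, ← integral_const_mul, ← integral_exp_neg_mul_norm_sq_mul_cos hw,
    re_charFun]
  exact integral_integral_swap hint

end InnerProduct

end GaussianAverage

section Subordination

open scoped ComplexOrder

lemma ofReal_integral_le_lintegral {α : Type*} [MeasurableSpace α] (μ : Measure α) (f : α → ℝ) :
    ENNReal.ofReal (∫ x, f x ∂μ) ≤ ∫⁻ x, ENNReal.ofReal (f x) ∂μ := by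
  by_cases hf : Integrable f μ
  · rw [integral_eq_lintegral_pos_part_sub_lintegral_neg_part hf]
    exact (ENNReal.ofReal_le_ofReal (sub_le_self _ ENNReal.toReal_nonneg)).trans
      ENNReal.ofReal_toReal_le
  · simp [integral_undef hf]

lemma ofReal_rpow_neg_eq_lintegral {a q : ℝ} (ha : 0 < a) (hq : 0 < q) :
    ENNReal.ofReal (q ^ (-a)) =
      ENNReal.ofReal (1 / Gamma a) *
        ∫⁻ u in Set.Ioi 0, ENNReal.ofReal (u ^ (a - 1)) * ENNReal.ofReal (exp (-(q * u))) := by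
  have h := integral_rpow_mul_exp_neg_mul_Ioi ha hq
  have hint : IntegrableOn (fun u => u ^ (a - 1) * exp (-(q * u))) (Set.Ioi 0) :=
    .of_integral_ne_zero (h ▸ by positivity)
  have hofReal : ∀ u ∈ Set.Ioi (0 : ℝ),
      ENNReal.ofReal (u ^ (a - 1)) * ENNReal.ofReal (exp (-(q * u))) =
        ENNReal.ofReal (u ^ (a - 1) * exp (-(q * u))) := fun u hu =>
    (ENNReal.ofReal_mul (rpow_nonneg hu.le _)).symm
  rw [setLIntegral_congr_fun measurableSet_Ioi hofReal, ← ofReal_integral_eq_lintegral_ofReal hint,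
    h, ← ENNReal.ofReal_mul (by positivity), one_div, one_div, inv_rpow hq.le, rpow_neg hq.le]
  · congr 1
    field_simp
  · filter_upwards [ae_restrict_mem measurableSet_Ioi] with u (hu : 0 < u)
    positivity

variable {V : Type*} [NormedAddCommGroup V] [InnerProductSpace ℝ V] [MeasurableSpace V]

/-- The positive part of the characteristic function of `ν`, damped by `exp (-w ‖ξ‖²)`. It takes
values in `ENNReal` so that Tonelli's theorem applies without integrability conditions. -/
noncomputable def dampedCharFun (ν : Measure V) (w : ℝ) (ξ : V) : ENNReal :=
  ENNReal.ofReal (exp (-w * ‖ξ‖ ^ 2)) * ENNReal.ofReal (charFun ν ξ).re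

lemma dampedCharFun_mul_exp (ν : Measure V) (v u : ℝ) (ξ : V) :
    dampedCharFun ν v ξ * ENNReal.ofReal (exp (-(‖ξ‖ ^ 2 * u))) = dampedCharFun ν (v + u) ξ := by
  rw [dampedCharFun, mul_right_comm, ← ENNReal.ofReal_mul (exp_pos _).le, ← exp_add, dampedCharFun,
    show -v * ‖ξ‖ ^ 2 + -(‖ξ‖ ^ 2 * u) = -(v + u) * ‖ξ‖ ^ 2 by ring]

variable [BorelSpace V] [FiniteDimensional ℝ V]

lemma measurable_dampedCharFun (ν : Measure V) [IsFiniteMeasure ν] :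
    Measurable fun p : ℝ × V => dampedCharFun ν p.1 p.2 := by
  unfold dampedCharFun
  fun_prop

lemma lintegral_dampedCharFun {ν : Measure V} [IsFiniteMeasure ν] (hν : ∀ ξ, 0 ≤ charFun ν ξ)
    {w : ℝ} (hw : 0 < w) :
    ∫⁻ ξ, dampedCharFun ν w ξ =
      ENNReal.ofReal ((π / w) ^ (Module.finrank ℝ V / 2 : ℝ) * gaussianAverage ν w) := by
  have hre (ξ : V) : |(charFun ν ξ).re| ≤ ν.real Set.univ :=
    (Complex.abs_re_le_norm _).trans (norm_charFun_le _)
  have hint : Integrable fun ξ => exp (-w * ‖ξ‖ ^ 2) * (charFun ν ξ).re :=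
    (integrable_exp_neg_mul_norm_sq hw).mul_bdd
      (Measurable.aestronglyMeasurable (by fun_prop)) (.of_forall hre)
  rw [mul_gaussianAverage_eq_integral_charFun ν hw, ofReal_integral_eq_lintegral_ofReal hint
    (.of_forall fun ξ => mul_nonneg (exp_pos _).le (Complex.nonneg_iff.1 (hν ξ)).1)]
  simp only [dampedCharFun, ENNReal.ofReal_mul (exp_pos _).le]

-- Subordination: `‖ξ‖ ^ (-2 * a)` is a superposition of the Gaussians `exp (-u * ‖ξ‖ ^ 2)`, each of
-- which only shifts the damping from `v` to `v + u`.
lemma ofReal_exp_mul_charFun_conv_le {ν κ : Measure V} [IsFiniteMeasure ν] [IsFiniteMeasure κ]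
    {a K : ℝ} (ha : 0 < a) (hK : 0 ≤ K) {ξ : V} (hξ : ξ ≠ 0) (hν : 0 ≤ charFun ν ξ)
    (hκ : (charFun κ ξ).re ≤ K * (‖ξ‖ ^ 2) ^ (-a)) (v : ℝ) :
    ENNReal.ofReal (exp (-v * ‖ξ‖ ^ 2) * (charFun (ν ∗ κ) ξ).re) ≤
      ENNReal.ofReal (K / Gamma a) *
        ∫⁻ u in Set.Ioi 0, ENNReal.ofReal (u ^ (a - 1)) * dampedCharFun ν (v + u) ξ := by
  obtain ⟨hre, him⟩ := Complex.nonneg_iff.1 hν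
  calc ENNReal.ofReal (exp (-v * ‖ξ‖ ^ 2) * (charFun (ν ∗ κ) ξ).re)
      ≤ ENNReal.ofReal (exp (-v * ‖ξ‖ ^ 2) * ((charFun ν ξ).re * (K * (‖ξ‖ ^ 2) ^ (-a)))) := by
        rw [charFun_conv, Complex.mul_re, ← him, zero_mul, sub_zero]
        gcongr
    _ = ENNReal.ofReal K * (dampedCharFun ν v ξ * ENNReal.ofReal ((‖ξ‖ ^ 2) ^ (-a))) := by
        rw [ENNReal.ofReal_mul (exp_pos _).le, ENNReal.ofReal_mul hre, ENNReal.ofReal_mul hK,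
          dampedCharFun]
        ring
    _ = ENNReal.ofReal (K / Gamma a) *
          ∫⁻ u in Set.Ioi 0, ENNReal.ofReal (u ^ (a - 1)) * dampedCharFun ν (v + u) ξ := by
        rw [ofReal_rpow_neg_eq_lintegral ha (by positivity), mul_left_comm (dampedCharFun ν v ξ),
          ← lintegral_const_mul _ (by fun_prop), ← mul_assoc, ← ENNReal.ofReal_mul hK, mul_one_div]
        simp only [mul_left_comm (dampedCharFun ν v ξ), dampedCharFun_mul_exp]

theorem ofReal_gaussianAverage_conv_le [Nontrivial V] {ν κ : Measure V} [IsFiniteMeasure ν]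
    [IsFiniteMeasure κ] {a K v : ℝ} (ha : 0 < a) (hK : 0 ≤ K) (hv : 0 < v)
    (hν : ∀ ξ, 0 ≤ charFun ν ξ) (hκ : ∀ ξ ≠ 0, (charFun κ ξ).re ≤ K * (‖ξ‖ ^ 2) ^ (-a)) :
    ENNReal.ofReal ((π / v) ^ (Module.finrank ℝ V / 2 : ℝ) * gaussianAverage (ν ∗ κ) v) ≤
      ENNReal.ofReal (K / Gamma a) * ∫⁻ u in Set.Ioi 0, ENNReal.ofReal (u ^ (a - 1)) *
        ENNReal.ofReal
          ((π / (v + u)) ^ (Module.finrank ℝ V / 2 : ℝ) * gaussianAverage ν (v + u)) := by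
  have hG := measurable_dampedCharFun ν
  have hmeas : Measurable fun p : V × ℝ =>
      ENNReal.ofReal (p.2 ^ (a - 1)) * dampedCharFun ν (v + p.2) p.1 := by fun_prop
  have hpull (u : ℝ) : ∫⁻ ξ, ENNReal.ofReal (u ^ (a - 1)) * dampedCharFun ν (v + u) ξ =
      ENNReal.ofReal (u ^ (a - 1)) * ∫⁻ ξ, dampedCharFun ν (v + u) ξ :=
    lintegral_const_mul _ (by fun_prop)
  rw [mul_gaussianAverage_eq_integral_charFun _ hv]
  calc ENNReal.ofReal (∫ ξ, exp (-v * ‖ξ‖ ^ 2) * (charFun (ν ∗ κ) ξ).re)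
      ≤ ∫⁻ ξ, ENNReal.ofReal (exp (-v * ‖ξ‖ ^ 2) * (charFun (ν ∗ κ) ξ).re) :=
        ofReal_integral_le_lintegral _ _
    _ ≤ ∫⁻ ξ : V, ENNReal.ofReal (K / Gamma a) *
          ∫⁻ u in Set.Ioi 0, ENNReal.ofReal (u ^ (a - 1)) * dampedCharFun ν (v + u) ξ := by
        refine lintegral_mono_ae ?_
        filter_upwards [Measure.ae_ne volume 0] with ξ hξ
        exact ofReal_exp_mul_charFun_conv_le ha hK hξ (hν ξ) (hκ ξ hξ) v
    _ = ENNReal.ofReal (K / Gamma a) * ∫⁻ u in Set.Ioi 0,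
          ENNReal.ofReal (u ^ (a - 1)) * ∫⁻ ξ, dampedCharFun ν (v + u) ξ := by
        rw [lintegral_const_mul _ hmeas.lintegral_prod_right',
          lintegral_lintegral_swap hmeas.aemeasurable]
        simp only [hpull]
    _ = _ := by
        congr 1
        refine setLIntegral_congr_fun measurableSet_Ioi fun u (hu : 0 < u) => ?_
        exact congrArg _ (lintegral_dampedCharFun hν (by positivity))

end Subordination

section CircleMeasure

/-- The point of the unit circle in the plane at angle `θ`. -/
noncomputable def unitVec (θ : ℝ) : EuclideanSpace ℝ (Fin 2) := !₂[cos θ, sin θ]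

/-- The image of `dθ` on one period under `θ ↦ r e^{iθ}`, i.e. the measure of total mass `2π` spread
uniformly over the circle of radius `r` around the origin of the plane. -/
noncomputable def circleMeasure (r : ℝ) : Measure (EuclideanSpace ℝ (Fin 2)) :=
  (volume.restrict (Set.Ioc 0 (2 * π))).map fun θ => r • unitVec θ

instance (r : ℝ) : IsFiniteMeasure (circleMeasure r) := by
  unfold circleMeasure
  infer_instance

@[fun_prop]
lemma continuous_unitVec : Continuous unitVec := by
  unfold unitVec
  fun_prop

lemma norm_unitVec (θ : ℝ) : ‖unitVec θ‖ = 1 := by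
  simp [unitVec, EuclideanSpace.norm_eq, Fin.sum_univ_two]

lemma exists_inner_unitVec_eq (x : EuclideanSpace ℝ (Fin 2)) :
    ∃ a : ℝ, ∀ θ, inner ℝ x (unitVec θ) = ‖x‖ * cos (θ - a) := by
  let z : ℂ := ⟨x 0, x 1⟩
  have hz : ‖z‖ = ‖x‖ := by
    rw [EuclideanSpace.norm_eq, Complex.norm_eq_sqrt_sq_add_sq]
    simp [z, Fin.sum_univ_two]
  have h0 : ‖x‖ * cos z.arg = x 0 := hz ▸ Complex.norm_mul_cos_arg z
  have h1 : ‖x‖ * sin z.arg = x 1 := hz ▸ Complex.norm_mul_sin_arg z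
  refine ⟨z.arg, fun θ => ?_⟩
  calc inner ℝ x (unitVec θ) = cos θ * x 0 + sin θ * x 1 := by
        simp [unitVec, PiLp.inner_apply, Fin.sum_univ_two]
    _ = ‖x‖ * cos (θ - z.arg) := by
        rw [← h0, ← h1, cos_sub]
        ring

lemma integral_comp_inner_unitVec {E : Type*} [NormedAddCommGroup E] [NormedSpace ℝ E] (h : ℝ → E)
    (x : EuclideanSpace ℝ (Fin 2)) :
    ∫ θ in (0 : ℝ)..2 * π, h (inner ℝ x (unitVec θ)) =
      ∫ θ in (0 : ℝ)..2 * π, h (‖x‖ * cos θ) := by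
  obtain ⟨a, ha⟩ := exists_inner_unitVec_eq x
  have hp : Function.Periodic (fun θ => h (‖x‖ * cos θ)) (2 * π) := fun θ => by simp
  simp only [ha]
  rw [intervalIntegral.integral_comp_sub_right (fun θ => h (‖x‖ * cos θ)) a, zero_sub,
    sub_eq_neg_add, hp.intervalIntegral_add_eq (-a) 0, zero_add]

lemma integral_circleMeasure {E : Type*} [NormedAddCommGroup E] [NormedSpace ℝ E] (r : ℝ)
    {f : EuclideanSpace ℝ (Fin 2) → E} (hf : AEStronglyMeasurable f (circleMeasure r)) :
    ∫ x, f x ∂circleMeasure r = ∫ θ in (0 : ℝ)..2 * π, f (r • unitVec θ) := by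
  rw [circleMeasure, integral_map (by fun_prop) hf, intervalIntegral.integral_of_le two_pi_pos.le]

lemma re_charFun_circleMeasure (r : ℝ) (ξ : EuclideanSpace ℝ (Fin 2)) :
    (charFun (circleMeasure r) ξ).re = circleCosIntegral (r * ‖ξ‖) := by
  rw [re_charFun, integral_circleMeasure r (Measurable.aestronglyMeasurable (by fun_prop)),
    circleCosIntegral]
  simp only [real_inner_comm ξ, real_inner_smul_right, mul_assoc]
  exact integral_comp_inner_unitVec (fun z => cos (r * z)) ξ

lemma re_charFun_circleMeasure_le {r : ℝ} (hr : 0 < r) {ξ : EuclideanSpace ℝ (Fin 2)}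
    (hξ : ξ ≠ 0) :
    (charFun (circleMeasure r) ξ).re ≤ 20 / √r * (‖ξ‖ ^ 2) ^ (-(1 / 4) : ℝ) := by
  have hξ' : 0 < ‖ξ‖ := norm_pos_iff.2 hξ
  calc (charFun (circleMeasure r) ξ).re ≤ 20 / √(r * ‖ξ‖) := by
        rw [re_charFun_circleMeasure]
        exact circleCosIntegral_le (by positivity)
    _ = 20 / √r * (‖ξ‖ ^ 2) ^ (-(1 / 4) : ℝ) := by
        rw [← rpow_natCast, ← rpow_mul hξ'.le, sqrt_mul hr.le, sqrt_eq_rpow ‖ξ‖, ← div_div,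
          div_eq_mul_inv _ (‖ξ‖ ^ _), ← rpow_neg hξ'.le]
        norm_num

lemma half_le_exp_neg_div {d r ρ θ : ℝ} (hd : 0 < d) (hρ : 0 ≤ ρ) (hρr : ρ ≤ r) (hrρ : r - d ≤ ρ)
    (hθ₀ : 0 ≤ θ) (hθ : θ * r ≤ d) :
    1 / 2 ≤ exp (-(ρ ^ 2 + r ^ 2 - 2 * r * (ρ * cos θ)) / (4 * d ^ 2)) := by
  have hr : 0 ≤ r := hρ.trans hρr
  have hsub : (r - ρ) ^ 2 ≤ d ^ 2 := pow_le_pow_left₀ (by linarith) (by linarith) 2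
  have hangle : r * ρ * θ ^ 2 ≤ d ^ 2 := calc
    r * ρ * θ ^ 2 ≤ r * r * θ ^ 2 := by gcongr
    _ = (θ * r) ^ 2 := by ring
    _ ≤ d ^ 2 := by gcongr
  have hcos : r * ρ * (1 - θ ^ 2 / 2) ≤ r * ρ * cos θ := by
    gcongr
    exact one_sub_sq_div_two_le_cos
  have hlow : -(1 / 2) ≤ -(ρ ^ 2 + r ^ 2 - 2 * r * (ρ * cos θ)) / (4 * d ^ 2) := by
    rw [le_div_iff₀ (by positivity)]
    nlinarith
  linarith [add_one_le_exp (-(ρ ^ 2 + r ^ 2 - 2 * r * (ρ * cos θ)) / (4 * d ^ 2))]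

lemma div_le_integral_circleMeasure {d r : ℝ} (hd : 0 < d) (hdr : d ≤ r)
    {x : EuclideanSpace ℝ (Fin 2)} (hx : r - d ≤ ‖x‖) (hxr : ‖x‖ ≤ r) :
    d / (2 * r) ≤ ∫ y, exp (-‖x + y‖ ^ 2 / (4 * d ^ 2)) ∂circleMeasure r := by
  have hr : 0 < r := hd.trans_le hdr
  let g (θ : ℝ) : ℝ := exp (-(‖x‖ ^ 2 + r ^ 2 - 2 * r * (‖x‖ * cos θ)) / (4 * d ^ 2))
  have hg : Continuous g := by fun_prop
  have hnorm (θ : ℝ) : ‖x + r • unitVec θ‖ ^ 2 =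
      ‖x‖ ^ 2 + r ^ 2 - 2 * r * inner ℝ (-x) (unitVec θ) := by
    rw [norm_add_sq_real, norm_smul, norm_unitVec, real_inner_smul_right, inner_neg_left,
      norm_of_nonneg hr.le]
    ring
  calc d / (2 * r) = ∫ _ in (0 : ℝ)..d / r, (1 / 2 : ℝ) := by
        rw [intervalIntegral.integral_const, smul_eq_mul]
        field_simp
        ring
    _ ≤ ∫ θ in (0 : ℝ)..d / r, g θ :=
        intervalIntegral.integral_mono_on (by positivity) (by simp) (hg.intervalIntegrable _ _)
          fun θ hθ => half_le_exp_neg_div hd (norm_nonneg x) hxr hx hθ.1 ((le_div_iff₀ hr).1 hθ.2)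
    _ ≤ ∫ θ in (0 : ℝ)..2 * π, g θ :=
        intervalIntegral.integral_mono_interval le_rfl (by positivity)
          (by linarith [div_le_one_of_le₀ hdr hr.le, pi_gt_three])
          (.of_forall fun _ => (exp_pos _).le) (hg.intervalIntegrable _ _)
    _ = ∫ y, exp (-‖x + y‖ ^ 2 / (4 * d ^ 2)) ∂circleMeasure r := by
        rw [integral_circleMeasure r (Measurable.aestronglyMeasurable (by fun_prop))]
        simp only [hnorm, g]
        rw [integral_comp_inner_unitVec
          (fun z => exp (-(‖x‖ ^ 2 + r ^ 2 - 2 * r * z) / (4 * d ^ 2))), norm_neg]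

theorem measureReal_annulus_mul_le {ν : Measure (EuclideanSpace ℝ (Fin 2))} [IsFiniteMeasure ν]
    {d r : ℝ} (hd : 0 < d) (hdr : d ≤ r) :
    ν.real {x | ‖x‖ ∈ Set.Icc (r - d) r} * (d / (2 * r)) ≤
      gaussianAverage (ν ∗ circleMeasure r) (d ^ 2) := by
  have hint := integrable_exp_neg_norm_sq_div (ν := ν ∗ circleMeasure r) (sq_nonneg d)
  have hint' := ((integrable_conv_iff hint.aestronglyMeasurable).1 hint).2
  simp only [norm_eq_abs, abs_exp] at hint'
  rw [gaussianAverage, integral_conv hint, mul_comm]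
  refine le_trans ?_ (mul_meas_ge_le_integral_of_nonneg
    (.of_forall fun x => integral_nonneg fun y => (exp_pos _).le) hint' (d / (2 * r)))
  have hr : 0 < r := hd.trans_le hdr
  exact mul_le_mul_of_nonneg_left
    (measureReal_mono fun x hx => div_le_integral_circleMeasure hd hdr hx.1 hx.2) (by positivity)

end CircleMeasure

section Annulus

open scoped ComplexOrder

lemma setLIntegral_Ioc_rpow_sub_one {p : ℝ} (hp : 0 < p) :
    ∫⁻ u in Set.Ioc 0 1, ENNReal.ofReal (u ^ (p - 1)) = ENNReal.ofReal (1 / p) := by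
  have hint : IntervalIntegrable (fun u : ℝ => u ^ (p - 1)) volume 0 1 :=
    intervalIntegral.intervalIntegrable_rpow' (by linarith)
  rw [← ofReal_integral_eq_lintegral_ofReal hint.1 ?_,
    ← intervalIntegral.integral_of_le zero_le_one, integral_rpow (.inl (by linarith)),
    sub_add_cancel, one_rpow, zero_rpow hp.ne', sub_zero]
  filter_upwards [ae_restrict_mem measurableSet_Ioc] with u hu
  exact rpow_nonneg hu.1.le _

lemma setLIntegral_Ioi_one_rpow {p : ℝ} (hp : p < -1) :
    ∫⁻ u in Set.Ioi 1, ENNReal.ofReal (u ^ p) = ENNReal.ofReal (-1 / (p + 1)) := by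
  rw [← ofReal_integral_eq_lintegral_ofReal (integrableOn_Ioi_rpow_of_lt hp one_pos) ?_,
    integral_Ioi_rpow_of_lt hp one_pos, one_rpow]
  filter_upwards [ae_restrict_mem measurableSet_Ioi] with u (hu : 1 < u)
  positivity

lemma rpow_sub_one_mul_div_add_le {a b c M u v y : ℝ} (hb : b ≤ 0) (hc : c ≤ 0) (hM : 0 ≤ M)
    (hu : 0 < u) (hv : 0 < v) (hy : y ≤ M * (v + u) ^ (b + c + 1)) :
    u ^ (a - 1) * (y / (v + u)) ≤ M * v ^ b * u ^ (a + c - 1) := by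
  have hw : 0 < v + u := by positivity
  calc u ^ (a - 1) * (y / (v + u))
      ≤ u ^ (a - 1) * (M * (v + u) ^ (b + c + 1) / (v + u)) := by gcongr
    _ = u ^ (a - 1) * (M * ((v + u) ^ b * (v + u) ^ c)) := by
        rw [rpow_add_one hw.ne', ← mul_assoc, mul_div_cancel_right₀ _ hw.ne', rpow_add hw]
    _ ≤ u ^ (a - 1) * (M * (v ^ b * u ^ c)) := by
        gcongr u ^ (a - 1) * (M * (?_ * ?_))
        · exact rpow_le_rpow_of_nonpos hv (by linarith) hb
        · exact rpow_le_rpow_of_nonpos hu (by linarith) hc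
    _ = M * v ^ b * u ^ (a + c - 1) := by
        rw [show a + c - 1 = (a - 1) + c by ring, rpow_add hu]
        ring

lemma rpow_sub_one_mul_div_add_le_rpow {a u v y : ℝ} (hu : 0 < u) (hv : 0 ≤ v) (hy : y ≤ 1) :
    u ^ (a - 1) * (y / (v + u)) ≤ u ^ (a - 2) := calc
  u ^ (a - 1) * (y / (v + u)) ≤ u ^ (a - 1) * (1 / u) := by
    gcongr
    linarith
  _ = u ^ (a - 2) := by
    rw [mul_one_div, ← rpow_sub_one hu.ne']
    ring_nf

lemma lintegral_rpow_mul_div_add_le {a b c M v : ℝ} {F : ℝ → ℝ} (ha : a < 1) (hb : b ≤ 0)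
    (hc : c ≤ 0) (hac : 0 < a + c) (hM : 0 ≤ M) (hv : 0 < v) (hF_one : ∀ w, 0 < w → F w ≤ 1)
    (hF : ∀ w, 0 < w → F w ≤ M * w ^ (b + c + 1)) :
    ∫⁻ u in Set.Ioi 0, ENNReal.ofReal (u ^ (a - 1)) * ENNReal.ofReal (F (v + u) / (v + u)) ≤
      ENNReal.ofReal (M * v ^ b / (a + c) + 1 / (1 - a)) := by
  rw [← Set.Ioc_union_Ioi_eq_Ioi zero_le_one, ENNReal.ofReal_add (by positivity)
    (one_div_nonneg.2 (by linarith))]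
  refine (lintegral_union_le _ _ _).trans (add_le_add ?_ ?_)
  · calc ∫⁻ u in Set.Ioc 0 1, ENNReal.ofReal (u ^ (a - 1)) * ENNReal.ofReal (F (v + u) / (v + u))
        ≤ ∫⁻ u in Set.Ioc 0 1,
            ENNReal.ofReal (M * v ^ b) * ENNReal.ofReal (u ^ (a + c - 1)) := by
          refine setLIntegral_mono (by fun_prop) fun u hu => ?_
          have hu₀ : 0 < u := hu.1
          rw [← ENNReal.ofReal_mul (by positivity), ← ENNReal.ofReal_mul (by positivity)]
          exact ENNReal.ofReal_le_ofReal
            (rpow_sub_one_mul_div_add_le hb hc hM hu₀ hv (hF _ (by positivity)))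
      _ = ENNReal.ofReal (M * v ^ b / (a + c)) := by
          rw [lintegral_const_mul _ (by fun_prop), setLIntegral_Ioc_rpow_sub_one hac,
            ← ENNReal.ofReal_mul (by positivity), mul_one_div]
  · calc ∫⁻ u in Set.Ioi 1, ENNReal.ofReal (u ^ (a - 1)) * ENNReal.ofReal (F (v + u) / (v + u))
        ≤ ∫⁻ u in Set.Ioi 1, ENNReal.ofReal (u ^ (a - 2)) := by
          refine setLIntegral_mono (by fun_prop) fun u (hu : 1 < u) => ?_
          have hu₀ : 0 < u := by positivity
          rw [← ENNReal.ofReal_mul (by positivity)]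
          exact ENNReal.ofReal_le_ofReal
            (rpow_sub_one_mul_div_add_le_rpow hu₀ hv.le (hF_one _ (by positivity)))
      _ = ENNReal.ofReal (1 / (1 - a)) := by
          rw [setLIntegral_Ioi_one_rpow (by linarith), show a - 2 + 1 = -(1 - a) by ring,
            neg_div_neg_eq]

lemma Gamma_le_one_of_mem_Icc {x : ℝ} (hx : x ∈ Set.Icc 1 2) : Gamma x ≤ 1 := by
  simpa using convexOn_Gamma.le_max_of_mem_Icc (Set.mem_Ioi.2 one_pos) (Set.mem_Ioi.2 two_pos) hx

lemma one_le_Gamma_of_mem_Ioc {x : ℝ} (hx : x ∈ Set.Ioc 0 1) : 1 ≤ Gamma x :=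
  Gamma_one ▸ Gamma_strictAntiOn_Ioc.antitoneOn hx ⟨one_pos, le_rfl⟩ hx.2

lemma gaussianAverage_le_four_mul {V : Type*} [NormedAddCommGroup V] [MeasurableSpace V]
    [OpensMeasurableSpace V] {ν : Measure V} [IsFiniteMeasure ν] {s C w : ℝ} (hs : 0 ≤ s)
    (hs1 : s ≤ 1) (hC : 0 ≤ C) (hw : 0 < w)
    (hν : ∀ r, 0 < r → ν.real (Metric.ball 0 r) ≤ C * r ^ (2 * s)) :
    gaussianAverage ν w ≤ 4 * C * w ^ s := calc
  gaussianAverage ν w ≤ C * (4 * w) ^ s * Gamma (s + 1) :=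
    gaussianAverage_le_of_measureReal_ball_le hs hC hw hν
  _ ≤ C * (4 * w) ^ s * 1 := by
    gcongr
    exact Gamma_le_one_of_mem_Icc ⟨by linarith, by linarith⟩
  _ = C * (4 ^ s * w ^ s) := by rw [mul_one, mul_rpow (by norm_num) hw.le]
  _ ≤ C * (4 ^ (1 : ℝ) * w ^ s) := by
    gcongr
    norm_num
  _ = 4 * C * w ^ s := by
    rw [rpow_one]
    ring

variable {ν : Measure (EuclideanSpace ℝ (Fin 2))}

lemma gaussianAverage_conv_circleMeasure_le_lintegral [IsFiniteMeasure ν] {r v : ℝ}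
    (hr : 0 < r) (hv : 0 < v) (hchar : ∀ ξ, 0 ≤ charFun ν ξ) :
    ENNReal.ofReal (gaussianAverage (ν ∗ circleMeasure r) v) ≤
      ENNReal.ofReal (20 * v / √r) * ∫⁻ u in Set.Ioi 0,
        ENNReal.ofReal (u ^ ((1 / 4 : ℝ) - 1)) *
          ENNReal.ofReal (gaussianAverage ν (v + u) / (v + u)) := by
  have hΓ : 1 ≤ Gamma (1 / 4) := one_le_Gamma_of_mem_Ioc ⟨by norm_num, by norm_num⟩
  have hplane (w g : ℝ) : ENNReal.ofReal
      ((π / w) ^ (Module.finrank ℝ (EuclideanSpace ℝ (Fin 2)) / 2 : ℝ) * g) =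
        ENNReal.ofReal π * ENNReal.ofReal (g / w) := by
    rw [finrank_euclideanSpace_fin, ← ENNReal.ofReal_mul pi_pos.le]
    norm_num
    ring_nf
  have h := ofReal_gaussianAverage_conv_le (by norm_num) (by positivity) hv hchar
    fun ξ hξ => re_charFun_circleMeasure_le hr hξ
  simp only [hplane, mul_left_comm _ (ENNReal.ofReal π)] at h
  rw [lintegral_const_mul' _ _ ENNReal.ofReal_ne_top, mul_left_comm,
    ENNReal.mul_le_mul_iff_right (by simpa using pi_pos) ENNReal.ofReal_ne_top] at h
  calc ENNReal.ofReal (gaussianAverage (ν ∗ circleMeasure r) v)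
      = ENNReal.ofReal v * ENNReal.ofReal (gaussianAverage (ν ∗ circleMeasure r) v / v) := by
        rw [← ENNReal.ofReal_mul hv.le, mul_div_cancel₀ _ hv.ne']
    _ ≤ ENNReal.ofReal v * (ENNReal.ofReal (20 / √r / 1) * _) := by
        refine mul_le_mul_right (h.trans ?_) _
        gcongr
    _ = _ := by
        rw [← mul_assoc, ← ENNReal.ofReal_mul hv.le]
        ring_nf

variable [IsProbabilityMeasure ν] {s t C d r : ℝ}

lemma gaussianAverage_conv_circleMeasure_le (hs : 0 ≤ s) (hs1 : s ≤ 1) (hst : 2 * s - 1 ≤ t)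
    (hts : t < 2 * s - 1 / 2) (ht : t ≤ 1) (hC : 1 ≤ C) (hd : 0 < d) (hd1 : d ≤ 1) (hr : 0 < r)
    (hchar : ∀ ξ, 0 ≤ charFun ν ξ)
    (hν : ∀ ρ, 0 < ρ → ν.real (Metric.ball 0 ρ) ≤ C * ρ ^ (2 * s)) :
    gaussianAverage (ν ∗ circleMeasure r) (d ^ 2) ≤
      240 * C * d ^ (t + 1) / (√r * (2 * s - t - 1 / 2)) := by
  set k := 2 * s - t - 1 / 2 with hk_def
  have hk : 0 < k := by linarith
  have hdt : 1 ≤ d ^ (t - 1) := one_le_rpow_of_pos_of_le_one_of_nonpos hd hd1 (by linarith)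
  have hdp : (d ^ 2) ^ ((t - 1) / 2) = d ^ (t - 1) := by
    rw [← rpow_natCast, ← rpow_mul hd.le]
    congr 1
    push_cast
    ring
  have henergy := lintegral_rpow_mul_div_add_le (a := 1 / 4) (b := (t - 1) / 2)
    (c := s - 1 / 2 - t / 2) (M := 4 * C) (v := d ^ 2) (F := gaussianAverage ν) (by norm_num)
    (by linarith) (by linarith) (by linarith) (by positivity) (by positivity)
    (fun w hw => gaussianAverage_le_one hw.le)
    (fun w hw => (gaussianAverage_le_four_mul hs hs1 (by positivity) hw hν).trans_eq
      (by ring_nf))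
  have hbracket : 4 * C * (d ^ 2) ^ ((t - 1) / 2) / (1 / 4 + (s - 1 / 2 - t / 2)) +
      1 / (1 - 1 / 4) ≤ 12 * C * d ^ (t - 1) / k := by
    have hCd : 1 ≤ C * d ^ (t - 1) := one_le_mul_of_one_le_of_one_le hC hdt
    rw [hdp, show 1 / 4 + (s - 1 / 2 - t / 2) = k / 2 by rw [hk_def]; ring, ← sub_nonneg]
    have : 0 ≤ (4 * (C * d ^ (t - 1)) - 4 / 3 * k) / k := div_nonneg (by linarith) hk.le
    convert this using 1
    field_simp
    ring
  have h := (gaussianAverage_conv_circleMeasure_le_lintegral hr (by positivity) hchar).trans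
    (mul_le_mul_right (henergy.trans (ENNReal.ofReal_le_ofReal hbracket)) _)
  rw [← ENNReal.ofReal_mul (by positivity), ENNReal.ofReal_le_ofReal_iff (by positivity)] at h
  refine h.trans_eq ?_
  rw [show t + 1 = t - 1 + (2 : ℕ) by push_cast; ring, rpow_add_natCast hd.ne']
  field_simp
  norm_num

theorem measureReal_annulus_le (hs : 0 ≤ s) (hs1 : s ≤ 1) (hst : 2 * s - 1 ≤ t)
    (hts : t < 2 * s - 1 / 2) (ht : t ≤ 1) (hC : 1 ≤ C) (hd : 0 < d) (hd1 : d ≤ 1) (hdr : d ≤ r)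
    (hchar : ∀ ξ, 0 ≤ charFun ν ξ)
    (hν : ∀ ρ, 0 < ρ → ν.real (Metric.ball 0 ρ) ≤ C * ρ ^ (2 * s)) :
    ν.real {x | ‖x‖ ∈ Set.Icc (r - d) r} ≤ 480 * √r * C * d ^ t / (2 * s - t - 1 / 2) := by
  have hr : 0 < r := hd.trans_le hdr
  have h := (measureReal_annulus_mul_le hd hdr).trans
    (gaussianAverage_conv_circleMeasure_le hs hs1 hst hts ht hC hd hd1 hr hchar hν)
  rw [← le_div_iff₀ (by positivity)] at h
  refine h.trans_eq ?_
  rw [rpow_add_one hd.ne']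
  field_simp
  rw [sq_sqrt hr.le]
  ring

end Annulus

section IndependentCopies

variable {Ω : Type*} [MeasurableSpace Ω] {P : Measure Ω}

lemma Frostman.mono {E : Type*} [PseudoMetricSpace E] {X : Ω → E} {s C C' : ℝ}
    (hX : Frostman P X s C) (hC : C ≤ C') : Frostman P X s C' := fun z r hr =>
  (hX z r hr).trans (by gcongr)

variable {V : Type*} [NormedAddCommGroup V] [MeasurableSpace V] [BorelSpace V]
  [SecondCountableTopology V] {W W' : Ω → V}

lemma Frostman.sub_of_indepFun [IsProbabilityMeasure P] {s C : ℝ} (hF : Frostman P W s C)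
    (hW : Measurable W) (hW' : Measurable W') (hWW' : IndepFun W W' P) :
    Frostman P (W - W') s C := by
  intro z r hr
  have hle : 0 ≤ C * r ^ s := ENNReal.toReal_nonneg.trans (hF z r hr)
  have hS : MeasurableSet {p : V × V | p.1 - p.2 ∈ Metric.ball z r} :=
    Metric.isOpen_ball.measurableSet.preimage (measurable_fst.sub measurable_snd)
  have hslice (y : V) : (fun x => (x, y)) ⁻¹' {p : V × V | p.1 - p.2 ∈ Metric.ball z r} =
      Metric.ball (z + y) r := by
    ext x
    simp [dist_eq_norm, sub_sub, add_comm y]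
  have := Measure.isProbabilityMeasure_map (μ := P) hW.aemeasurable
  have := Measure.isProbabilityMeasure_map (μ := P) hW'.aemeasurable
  rw [← ENNReal.le_ofReal_iff_toReal_le (measure_ne_top _ _) hle]
  calc P ((W - W') ⁻¹' Metric.ball z r)
      = P.map (fun ω => (W ω, W' ω)) {p | p.1 - p.2 ∈ Metric.ball z r} :=
        (Measure.map_apply (hW.prodMk hW') hS).symm
    _ = ∫⁻ y, P (W ⁻¹' Metric.ball (z + y) r) ∂P.map W' := by
        rw [(indepFun_iff_map_prod_eq_prod_map_map hW.aemeasurable hW'.aemeasurable).1 hWW',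
          Measure.prod_apply_symm hS]
        simp only [hslice, Measure.map_apply hW Metric.isOpen_ball.measurableSet]
    _ ≤ ∫⁻ _, ENNReal.ofReal (C * r ^ s) ∂P.map W' := lintegral_mono fun y =>
        (ENNReal.le_ofReal_iff_toReal_le (measure_ne_top _ _) hle).2 (hF (z + y) r hr)
    _ = ENNReal.ofReal (C * r ^ s) := by simp

open scoped ComplexOrder ComplexConjugate

variable [InnerProductSpace ℝ V]

lemma charFun_map_sub_eq_mul_conj [IsFiniteMeasure P] (hW : Measurable W) (hW' : Measurable W')
    (hWW' : IndepFun W W' P) (ξ : V) :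
    charFun (P.map (W - W')) ξ = charFun (P.map W) ξ * conj (charFun (P.map W') ξ) := by
  have hneg : charFun (P.map (-W')) ξ = conj (charFun (P.map W') ξ) := by
    have h := charFun_map_smul_comp (μ := P) hW'.aemeasurable (-1) ξ
    rwa [neg_smul, one_smul, charFun_neg, show (fun ω => (-1 : ℝ) • W' ω) = -W' by ext; simp] at h
  rw [sub_eq_add_neg, (hWW'.comp measurable_id measurable_neg).charFun_map_add_eq_mul
    hW.aemeasurable hW'.neg.aemeasurable, Pi.mul_apply, ← hneg]

lemma charFun_map_sub_nonneg [IsFiniteMeasure P] (hW : Measurable W) (hW' : Measurable W')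
    (hWW' : IndepFun W W' P) (hlaw : P.map W = P.map W') (ξ : V) :
    0 ≤ charFun (P.map (W - W')) ξ := by
  rw [charFun_map_sub_eq_mul_conj hW hW' hWW', hlaw]
  exact mul_star_self_nonneg _

end IndependentCopies

section Entropy

lemma logPlus_nonneg (x : ℝ) : 0 ≤ logPlus x := le_max_right _ _

lemma logb_max_one_le_logPlus (x : ℝ) : logb 2 (max x 1) ≤ logPlus x := by
  rcases le_total x 1 with h | h
  · simp [max_eq_right h, logPlus]
  · simp [max_eq_left h, logPlus]

variable {Ω : Type*} [MeasurableSpace Ω] {P : Measure Ω} [IsProbabilityMeasure P]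

lemma neg_logb_le_entOf {S : Type*} [MeasurableSpace S] [MeasurableSingletonClass S] {f : Ω → S}
    (hf : Measurable f) {T : Finset S} (hT : ∀ᵐ ω ∂P, f ω ∈ T) {M : ℝ}
    (hM : ∀ z ∈ T, P.real (f ⁻¹' {z}) ≤ M) : -logb 2 M ≤ entOf P f := by
  have hmass : ∑ z ∈ T, P.real (f ⁻¹' {z}) = 1 := by
    have hPT : P (f ⁻¹' T) = 1 := (prob_compl_eq_zero_iff (hf T.measurableSet)).1 hT
    simp only [measureReal_def]
    rw [← ENNReal.toReal_sum fun _ _ => measure_ne_top _ _,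
      sum_measure_preimage_singleton T fun z _ => hf (measurableSet_singleton z), hPT,
      ENNReal.toReal_one]
  have hnull : ∀ z ∉ T, P (f ⁻¹' {z}) = 0 := fun z hz =>
    measure_mono_null (fun ω (hω : f ω = z) => show f ω ∉ T from hω ▸ hz) hT
  rw [entOf, tsum_eq_sum fun z hz => by simp [hnull z hz]]
  calc -logb 2 M = ∑ z ∈ T, -(P.real (f ⁻¹' {z}) * logb 2 M) := by
        rw [Finset.sum_neg_distrib, ← Finset.sum_mul, hmass, one_mul]
    _ ≤ ∑ z ∈ T, -(P.real (f ⁻¹' {z}) * logb 2 (P.real (f ⁻¹' {z}))) := by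
        refine Finset.sum_le_sum fun z hz => neg_le_neg ?_
        rcases (measureReal_nonneg (μ := P) (s := f ⁻¹' {z})).eq_or_lt with h | h
        · simp [← h]
        · gcongr
          · norm_num
          · exact hM z hz

lemma Dn_le (n : ℕ) (x : ℝ) : Dn n x ≤ x := by
  rw [Dn, div_le_iff₀' (by positivity)]
  exact Int.floor_le _

lemma lt_Dn_add (n : ℕ) (x : ℝ) : x < Dn n x + (2 ^ n)⁻¹ := by
  rw [Dn, ← one_div, ← add_div, lt_div_iff₀' (by positivity)]
  exact Int.lt_floor_add_one _

lemma Dn_nonneg (n : ℕ) {x : ℝ} (hx : 0 ≤ x) : 0 ≤ Dn n x := by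
  unfold Dn
  positivity

lemma measurable_Dn (n : ℕ) : Measurable (Dn n) := by
  unfold Dn
  fun_prop

lemma finite_image_Dn_Icc (n : ℕ) (a b : ℝ) : (Dn n '' Set.Icc a b).Finite := by
  refine ((Set.finite_Icc ⌊2 ^ n * a⌋ ⌊2 ^ n * b⌋).image fun k : ℤ => (k : ℝ) / 2 ^ n).subset ?_
  rintro _ ⟨x, hx, rfl⟩
  refine ⟨⌊2 ^ n * x⌋, ⟨?_, ?_⟩, rfl⟩ <;> gcongr
  exacts [hx.1, hx.2]

lemma neg_logb_le_Hn {X : Ω → ℝ} (hX : Measurable X) {n : ℕ} {D M : ℝ}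
    (hXD : ∀ᵐ ω ∂P, X ω ∈ Set.Icc 0 D)
    (hM : ∀ r ∈ Set.Icc (2 ^ n)⁻¹ (D + (2 ^ n)⁻¹),
      P.real {ω | X ω ∈ Set.Icc (r - (2 ^ n)⁻¹) r} ≤ M) :
    -logb 2 M ≤ Hn P n X := by
  refine neg_logb_le_entOf (T := (finite_image_Dn_Icc n 0 D).toFinset)
    ((measurable_Dn n).comp hX) (hXD.mono fun ω hω => by simpa using ⟨X ω, hω, rfl⟩) ?_
  simp only [Set.Finite.mem_toFinset, Set.forall_mem_image]
  intro x hx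
  refine (measureReal_mono fun ω (hω : Dn n (X ω) = Dn n x) => ?_).trans
    (hM (Dn n x + (2 ^ n)⁻¹) ⟨?_, ?_⟩)
  · rw [add_sub_cancel_right, ← hω]
    exact ⟨Dn_le n _, (lt_Dn_add n _).le⟩
  · linarith [Dn_nonneg n hx.1]
  · linarith [Dn_le n x, hx.2]

end Entropy

section DistanceFunction

variable {Ω : Type*} [MeasurableSpace Ω] {P : Measure Ω}

lemma ae_dist_mem_Icc {V : Type*} [SeminormedAddCommGroup V] [MeasurableSpace V] [BorelSpace V]
    {W W' : Ω → V} {R : ℝ} (hW : Measurable W) (hW' : Measurable W')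
    (hlaw : P.map W = P.map W') (hR : ∀ᵐ ω ∂P, W ω ∈ Metric.ball 0 R) :
    ∀ᵐ ω ∂P, dist (W ω) (W' ω) ∈ Set.Icc 0 (2 * R) := by
  have hR' : ∀ᵐ ω ∂P, W' ω ∈ Metric.ball 0 R := by
    refine ae_of_ae_map hW'.aemeasurable ?_
    rw [← hlaw]
    exact (ae_map_iff hW.aemeasurable Metric.isOpen_ball.measurableSet).2 hR
  filter_upwards [hR, hR'] with ω hω hω'
  rw [Metric.mem_ball] at hω hω'
  exact ⟨dist_nonneg, by linarith [dist_triangle_right (W ω) (W' ω) 0]⟩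

variable [IsProbabilityMeasure P] {W W' : Ω → EuclideanSpace ℝ (Fin 2)} {s t C R d r : ℝ}

lemma measureReal_dist_mem_Icc_le (hs : 0 ≤ s) (hs1 : s ≤ 1) (hts : t < 2 * s - 1 / 2)
    (ht : t ≤ 1) (hW : Measurable W) (hW' : Measurable W') (hF : Frostman P W (2 * s) C)
    (hWW' : IndepFun W W' P) (hlaw : P.map W = P.map W') (hd : 0 < d) (hd1 : d ≤ 1) (hdr : d ≤ r) :
    P.real {ω | dist (W ω) (W' ω) ∈ Set.Icc (r - d) r} ≤
      480 * √r * max C 1 * d ^ t / min (2 * s - t - 1 / 2) (1 / 2) := by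
  have hmeas : Measurable (W - W') := hW.sub hW'
  have := Measure.isProbabilityMeasure_map (μ := P) hmeas.aemeasurable
  have hball (ρ : ℝ) (hρ : 0 < ρ) :
      (P.map (W - W')).real (Metric.ball 0 ρ) ≤ max C 1 * ρ ^ (2 * s) := by
    rw [map_measureReal_apply hmeas Metric.isOpen_ball.measurableSet]
    exact (hF.mono (le_max_left C 1)).sub_of_indepFun hW hW' hWW' 0 ρ hρ
  have hmap : (P.map (W - W')).real {x | ‖x‖ ∈ Set.Icc (r - d) r} =
      P.real {ω | dist (W ω) (W' ω) ∈ Set.Icc (r - d) r} := by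
    simp only [dist_eq_norm]
    exact map_measureReal_apply hmeas (measurableSet_Icc.preimage measurable_norm)
  have hk : 2 * s - max t (2 * s - 1) - 1 / 2 = min (2 * s - t - 1 / 2) (1 / 2) := by
    rw [← min_sub_sub_left, ← min_sub_sub_right]
    ring_nf
  -- If `t < 2 * s - 1`, raising it to `2 * s - 1` only shrinks `d ^ t`, with denominator `1 / 2`.
  have hann := measureReal_annulus_le hs hs1 (le_max_right t (2 * s - 1))
    (max_lt hts (by linarith)) (max_le ht (by linarith)) (le_max_right C 1) hd hd1 hdr
    (charFun_map_sub_nonneg hW hW' hWW' hlaw) hball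
  rw [hmap, hk] at hann
  refine hann.trans ?_
  gcongr 480 * √r * max C 1 * ?_ / _
  · exact (lt_min (by linarith) (by norm_num)).le
  · exact rpow_le_rpow_of_exponent_ge hd hd1 (le_max_left _ _)

lemma neg_logb_min_half_le (k : ℝ) : -logb 2 (min k (1 / 2)) ≤ |logb 2 k| + 1 := by
  rcases le_total k (1 / 2) with h | h
  · rw [min_eq_left h]
    linarith [neg_le_abs (logb 2 k)]
  · rw [min_eq_right h, one_div, logb_inv, logb_self_eq_one one_lt_two]
    linarith [abs_nonneg (logb 2 k)]

theorem entropy_distance_large_general (hs : 0 ≤ s) (hs1 : s ≤ 1) (ht : t ≤ 1)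
    (hts : t < 2 * s - 1 / 2) (hW : Measurable W) (hW' : Measurable W')
    (hF : Frostman P W (2 * s) C) (hR : ∀ᵐ ω ∂P, W ω ∈ Metric.ball 0 R)
    (hWW' : IndepFun W W' P) (hlaw : P.map W = P.map W') (n : ℕ) :
    n * t - logPlus C - logPlus R / 2 - |logb 2 (2 * s - t - 1 / 2)| - 11 ≤
      Hn P n fun ω => dist (W ω) (W' ω) := by
  have hk : 0 < min (2 * s - t - 1 / 2) (1 / 2) := lt_min (by linarith) (by norm_num)
  have hd1 : ((2 : ℝ) ^ n)⁻¹ ≤ 1 := inv_le_one_of_one_le₀ (one_le_pow₀ one_le_two)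
  have hent := neg_logb_le_Hn
    (M := 480 * √(4 * max R 1) * max C 1 * ((2 ^ n)⁻¹) ^ t / min (2 * s - t - 1 / 2) (1 / 2))
    (hW.dist hW') (ae_dist_mem_Icc hW hW' hlaw hR) fun r hr => by
      refine (measureReal_dist_mem_Icc_le hs hs1 hts ht hW hW' hF hWW' hlaw (by positivity) hd1
        hr.1).trans ?_
      gcongr
      linarith [hr.2, le_max_left R 1, le_max_right R 1]
  refine le_trans ?_ hent
  rw [logb_div (by positivity) hk.ne', logb_mul (by positivity) (by positivity),
    logb_mul (by positivity) (by positivity), logb_mul (by norm_num) (by positivity),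
    logb_rpow_eq_mul_logb_of_pos (by positivity), logb_inv, logb_pow, logb_self_eq_one one_lt_two,
    sqrt_eq_rpow, logb_rpow_eq_mul_logb_of_pos (by positivity),
    logb_mul (by norm_num) (by positivity)]
  have h480 : logb 2 480 ≤ 9 := by
    rw [logb_le_iff_le_rpow one_lt_two (by norm_num)]
    norm_num
  have h4 : logb 2 4 = 2 := by
    rw [logb_eq_iff_rpow_eq two_pos (by norm_num) (by norm_num)]
    norm_num
  linarith [logb_max_one_le_logPlus C, logb_max_one_le_logPlus R,
    neg_logb_min_half_le (2 * s - t - 1 / 2)]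

end DistanceFunction

/-- Theorem (entropy of the distance function, large dimension): there is an absolute `A > 0`
and for each `t` a constant `B = B(t) > 0` such that: whenever `1/2 < s < 1`, `C, R > 0`,
`W` is a `(2s,C)`-Frostman random variable with values in `B(0,R) ⊂ ℝ²` and `W'` is an
independent copy of `W`, and `t ≤ 1`, `s < t < 2s − 1/2`, then for every `n`,
`Hₙ(|W − W'|) ≥ nt − log₊C − A log₊R − A |log(2s − t − 1/2)| − B`. -/
theorem entropy_distance_large :
    ∃ A : ℝ, 0 < A ∧
      ∀ t : ℝ, ∃ B : ℝ, 0 < B ∧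
        ∀ (s C R : ℝ), 1 / 2 < s → s < 1 → 0 < C → 0 < R →
          ∀ (Ω : Type) (mΩ : MeasurableSpace Ω) (P : Measure Ω),
            IsProbabilityMeasure P →
            ∀ (W W' : Ω → EuclideanSpace ℝ (Fin 2)), Measurable W → Measurable W' →
              Frostman P W (2 * s) C →
              (∀ ω, W ω ∈ Metric.ball (0 : EuclideanSpace ℝ (Fin 2)) R) →
              IndepFun W W' P →
              Measure.map W P = Measure.map W' P →
              t ≤ 1 → s < t → t < 2 * s - 1 / 2 →
              ∀ n : ℕ,
                (n : ℝ) * t - logPlus C - A * logPlus R -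
                    A * |Real.logb 2 (2 * s - t - 1 / 2)| - B ≤
                  Hn P n (fun ω => dist (W ω) (W' ω)) := by
  refine ⟨1, one_pos, fun t => ⟨11, by norm_num, ?_⟩⟩
  intro s C R hs hs1 _ _ Ω _ P _ W W' hW hW' hF hR hWW' hlaw ht _ hts n
  have hmain := entropy_distance_large_general (by linarith) hs1.le ht hts hW hW' hF
    (.of_forall hR) hWW' hlaw n
  linarith [logPlus_nonneg R]
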